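/- On ℂ⁵ with coordinates (x₁,x₂,y₃,y₂,y₁), let ω₁(w)(v) = v_{y₃} − x₂v_{x₁} + x₁v_{x₂}, ω₂(w)(v) = v_{y₂} − (3/2)x₁v_{y₃} + (3/2)y₃v_{x₁} − x₁²v_{x₂} + x₁x₂v_{x₁}, ω₃(w)(v) = v_{y₁} + (3/2)x₂v_{y₃} − (3/2)y₃v_{x₂} + x₁x₂v_{x₂} − x₂²v_{x₁}, and let D_w = ker(ω₁(w)) ∩ ker(ω₂(w)) ∩ ker(ω₃(w)). Then: (a) for all differentiable vector fields X, Y : ℂ⁵ → ℂ⁵ valued in D, both ω₂(w)([X,Y](w)) = 0 and ω₃(w)([X,Y](w)) = 0 for all w; and (b) there exist differentiable vector fields X, Y valued in D with ω₁(w)([X,Y](w)) ≠ 0 for every w ∈ ℂ⁵. (Hence the derived system of the G₂ twistor Pfaffian system is {ω₂, ω₃}, of rank 2, and the original system is not completely integrable.) -/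

import Mathlib

theorem line_deriv (Y : (Fin 5 → ℂ) → (Fin 5 → ℂ)) (hY : Differentiable ℂ Y)
    (w u : Fin 5 → ℂ) (i : Fin 5) :
    HasDerivAt (fun t : ℂ => Y (w + t • u) i) (fderiv ℂ Y w u i) 0 := by
  have hl : HasDerivAt (fun t : ℂ => w + t • u) u 0 := by
    simpa using ((hasDerivAt_id (0 : ℂ)).smul_const u).const_add w
  have hd : HasFDerivAt Y (fderiv ℂ Y w) (w + (0 : ℂ) • u) := by
    simpa using (hY w).hasFDerivAt
  exact (hasDerivAt_pi.1 (hd.comp_hasDerivAt (0 : ℂ) hl)) i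

theorem coord_deriv (w u : Fin 5 → ℂ) (i : Fin 5) :
    HasDerivAt (fun t : ℂ => (w + t • u) i) (u i) 0 := by
  simpa using ((hasDerivAt_id (0 : ℂ)).mul_const (u i)).const_add (w i)

theorem diff_forms (Y : (Fin 5 → ℂ) → (Fin 5 → ℂ)) (hY : Differentiable ℂ Y)
    (h2 : ∀ w, Y w 3 - (3/2) * w 0 * Y w 2 + (3/2) * w 2 * Y w 0
      - w 0 ^ 2 * Y w 1 + w 0 * w 1 * Y w 0 = 0)
    (h3 : ∀ w, Y w 4 + (3/2) * w 1 * Y w 2 - (3/2) * w 2 * Y w 1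
      + w 0 * w 1 * Y w 1 - w 1 ^ 2 * Y w 0 = 0) (w u A : Fin 5 → ℂ)
    (hA : fderiv ℂ Y w u = A) :
    (A 3 - (3/2) * (u 0 * Y w 2 + w 0 * A 2) + (3/2) * (u 2 * Y w 0 + w 2 * A 0)
      - (2 * w 0 * u 0 * Y w 1 + w 0 ^ 2 * A 1)
      + (u 0 * w 1 * Y w 0 + w 0 * u 1 * Y w 0 + w 0 * w 1 * A 0) = 0) ∧
    (A 4 + (3/2) * (u 1 * Y w 2 + w 1 * A 2) - (3/2) * (u 2 * Y w 1 + w 2 * A 1)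
      + (u 0 * w 1 * Y w 1 + w 0 * u 1 * Y w 1 + w 0 * w 1 * A 1)
      - (2 * w 1 * u 1 * Y w 0 + w 1 ^ 2 * A 0) = 0) := by
  have d := line_deriv Y hY w u
  rw [hA] at d
  have c := coord_deriv w u
  constructor
  · have e := (((((d 3).sub (((c 0).const_mul (3/2)).mul (d 2))).add
      (((c 2).const_mul (3/2)).mul (d 0))).sub (((c 0).pow 2).mul (d 1))).add
      (((c 0).mul (c 1)).mul (d 0)))
    have e' := e.unique ((hasDerivAt_const (0 : ℂ) (0 : ℂ)).congr_of_eventuallyEq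
      (Filter.Eventually.of_forall fun t => h2 (w + t • u)))
    simp at e'
    linear_combination e'
  · have e := (((((d 4).add (((c 1).const_mul (3/2)).mul (d 2))).sub
      (((c 2).const_mul (3/2)).mul (d 1))).add (((c 0).mul (c 1)).mul (d 1))).sub
      (((c 1).pow 2).mul (d 0)))
    have e' := e.unique ((hasDerivAt_const (0 : ℂ) (0 : ℂ)).congr_of_eventuallyEq
      (Filter.Eventually.of_forall fun t => h3 (w + t • u)))
    simp at e'
    linear_combination e'

/-- For the G₂ twistor Pfaffian system `{ω₁, ω₂, ω₃}` on `ℂ⁵` with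
distribution `D = ker ω₁ ∩ ker ω₂ ∩ ker ω₃`: (a) brackets of differentiable vector
fields valued in `D` are annihilated by both `ω₂` and `ω₃`; (b) some pair of
differentiable vector fields valued in `D` has bracket on which `ω₁` never vanishes.
Hence the derived system is `{ω₂, ω₃}` and the system is not completely integrable. -/
theorem stmt11 (ω₁ ω₂ ω₃ : (Fin 5 → ℂ) → ((Fin 5 → ℂ) →L[ℂ] ℂ))
    (hω₁ : ∀ w v, ω₁ w v = v 2 - w 1 * v 0 + w 0 * v 1)
    (hω₂ : ∀ w v, ω₂ w v = v 3 - (3/2) * w 0 * v 2 + (3/2) * w 2 * v 0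
      - w 0 ^ 2 * v 1 + w 0 * w 1 * v 0)
    (hω₃ : ∀ w v, ω₃ w v = v 4 + (3/2) * w 1 * v 2 - (3/2) * w 2 * v 1
      + w 0 * w 1 * v 1 - w 1 ^ 2 * v 0) :
    (∀ X Y : (Fin 5 → ℂ) → (Fin 5 → ℂ), Differentiable ℂ X → Differentiable ℂ Y →
      (∀ w, ω₁ w (X w) = 0 ∧ ω₂ w (X w) = 0 ∧ ω₃ w (X w) = 0) →
      (∀ w, ω₁ w (Y w) = 0 ∧ ω₂ w (Y w) = 0 ∧ ω₃ w (Y w) = 0) →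
      ∀ w, ω₂ w (fderiv ℂ Y w (X w) - fderiv ℂ X w (Y w)) = 0 ∧
           ω₃ w (fderiv ℂ Y w (X w) - fderiv ℂ X w (Y w)) = 0) ∧
    (∃ X Y : (Fin 5 → ℂ) → (Fin 5 → ℂ), Differentiable ℂ X ∧ Differentiable ℂ Y ∧
      (∀ w, ω₁ w (X w) = 0 ∧ ω₂ w (X w) = 0 ∧ ω₃ w (X w) = 0) ∧
      (∀ w, ω₁ w (Y w) = 0 ∧ ω₂ w (Y w) = 0 ∧ ω₃ w (Y w) = 0) ∧
      ∀ w, ω₁ w (fderiv ℂ Y w (X w) - fderiv ℂ X w (Y w)) ≠ 0) := by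
  constructor
  · intro X Y hX hY kX kY w
    simp only [hω₁, hω₂, hω₃] at kX kY
    obtain ⟨y2, y3⟩ := diff_forms Y hY (fun w => (kY w).2.1) (fun w => (kY w).2.2) w (X w) _ rfl
    obtain ⟨x2, x3⟩ := diff_forms X hX (fun w => (kX w).2.1) (fun w => (kX w).2.2) w (Y w) _ rfl
    have a := (kX w).1
    have b := (kY w).1
    simp only [hω₂, hω₃, Pi.sub_apply]
    constructor
    · linear_combination y2 - x2 + 3 * X w 0 * b - 3 * Y w 0 * a
    · linear_combination y3 - x3 - 3 * X w 1 * b + 3 * Y w 1 * a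
  · let X : (Fin 5 → ℂ) → (Fin 5 → ℂ) := fun w =>
      ![1, 0, w 1, 1/2 * (w 0 * w 1) - 3/2 * w 2, -(1/2) * w 1 ^ 2]
    let Y : (Fin 5 → ℂ) → (Fin 5 → ℂ) := fun w =>
      ![0, 1, -w 0, -(1/2) * w 0 ^ 2, 1/2 * (w 0 * w 1) + 3/2 * w 2]
    have hX : Differentiable ℂ X := by
      rw [differentiable_pi]
      intro i
      fin_cases i <;> simp [X] <;> fun_prop
    have hY : Differentiable ℂ Y := by
      rw [differentiable_pi]
      intro i
      fin_cases i <;> simp [Y] <;> fun_prop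
    refine ⟨X, Y, hX, hY, ?_, ?_, ?_⟩
    · intro w
      simp only [hω₁, hω₂, hω₃]
      refine ⟨?_, ?_, ?_⟩ <;> simp [X] <;> ring
    · intro w
      simp only [hω₁, hω₂, hω₃]
      refine ⟨?_, ?_, ?_⟩ <;> simp [Y] <;> ring
    · intro w
      have x0 : fderiv ℂ X w (Y w) 0 = 0 :=
        (line_deriv X hX w (Y w) 0).unique (hasDerivAt_const (0 : ℂ) (1 : ℂ))
      have x1 : fderiv ℂ X w (Y w) 1 = 0 :=
        (line_deriv X hX w (Y w) 1).unique (hasDerivAt_const (0 : ℂ) (0 : ℂ))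
      have x2 : fderiv ℂ X w (Y w) 2 = 1 :=
        (line_deriv X hX w (Y w) 2).unique (coord_deriv w (Y w) 1)
      have y0 : fderiv ℂ Y w (X w) 0 = 0 :=
        (line_deriv Y hY w (X w) 0).unique (hasDerivAt_const (0 : ℂ) (0 : ℂ))
      have y1 : fderiv ℂ Y w (X w) 1 = 0 :=
        (line_deriv Y hY w (X w) 1).unique (hasDerivAt_const (0 : ℂ) (1 : ℂ))
      have y2 : fderiv ℂ Y w (X w) 2 = -1 :=
        (line_deriv Y hY w (X w) 2).unique (coord_deriv w (X w) 0).neg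
      simp only [hω₁, Pi.sub_apply, x0, x1, x2, y0, y1, y2]
      norm_num
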